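/- An ω-word ξ ∈ X^ω belongs to some regular ω-language of first Baire category if and only if ξ is not disjunctive; equivalently, the union R₀ of all regular ω-languages of first Baire category equals ⋃_{w ∈ X*} (X^ω \ X*·w·X^ω). -/

import Mathlib

open Set MeasureTheory Computability

namespace AutoBaire

/-- The Cantor topology on the space of ω-words over `X`:
the product of the discrete topology on `X`. -/
def cantorTop (X : Type) : TopologicalSpace (ℕ → X) :=
  @Pi.topologicalSpace ℕ (fun _ => X) (fun _ => ⊥)

/-- The Borel σ-algebra of the Cantor space. -/
def cantorBorel (X : Type) : MeasurableSpace (ℕ → X) :=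
  @borel (ℕ → X) (cantorTop X)

variable {X : Type}

/-- Concatenation `w·ξ` of a finite word with an ω-word. -/
def wcat (w : List X) (ξ : ℕ → X) : ℕ → X :=
  Stream'.appendStream' w ξ

/-- The ball (cylinder) `w·X^ω`. -/
def cyl (w : List X) : Set (ℕ → X) := {ξ | ∃ η : ℕ → X, ξ = wcat w η}

/-- The ω-language `W·A` for a language `W` and an ω-language `A`. -/
def catOmega (W : Language X) (A : Set (ℕ → X)) : Set (ℕ → X) :=
  {ξ | ∃ w ∈ W, ∃ η ∈ A, ξ = wcat w η}

/-- `V^ω`: the set of ω-words that are infinite concatenations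
`v₁·v₂·⋯` of non-empty words `vᵢ ∈ V`. -/
def omegaPow (V : Language X) : Set (ℕ → X) :=
  {ξ | ∃ f : ℕ → List X, (∀ i, f i ∈ V ∧ f i ≠ []) ∧
    ∀ k, ξ ∈ cyl (((List.range k).map f).flatten)}

/-- Regular languages: those obtained from finite languages via the operations
union, concatenation and star. -/
inductive IsRegLang : Language X → Prop
  | finite (W : Language X) : (W : Set (List X)).Finite → IsRegLang W
  | union (W V : Language X) : IsRegLang W → IsRegLang V → IsRegLang (W + V)
  | concat (W V : Language X) : IsRegLang W → IsRegLang V → IsRegLang (W * V)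
  | star (W : Language X) : IsRegLang W → IsRegLang (W∗)

/-- Regular ω-languages: finite unions `⋃ᵢ Wᵢ·Vᵢ^ω` with `Wᵢ, Vᵢ` regular. -/
def IsRegOmega (F : Set (ℕ → X)) : Prop :=
  ∃ (n : ℕ) (W V : Fin n → Language X),
    (∀ i, IsRegLang (W i) ∧ IsRegLang (V i)) ∧
    F = ⋃ i, catOmega (W i) (omegaPow (V i))

/-- `X*·w·X^ω`: the set of ω-words containing `w` as an infix. -/
def infixOcc (w : List X) : Set (ℕ → X) :=
  {ξ | ∃ u : List X, ξ ∈ cyl (u ++ w)}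

/-- An ω-word is disjunctive if every finite word occurs in it as an infix. -/
def Disjunctive (ξ : ℕ → X) : Prop := ∀ w : List X, ξ ∈ infixOcc w

/-- Ultimately periodic ω-words: `ξ = w·v·v·v·⋯` with `v ≠ e`. -/
def UltPeriodic (ξ : ℕ → X) : Prop :=
  ∃ (w v : List X) (h : v ≠ []), ξ = wcat w (Stream'.cycle v h)

/-- The Automatic Baire property: `F Δ E ⊆ F'` for some regular open
ω-language `E` and some regular ω-language `F'` of first Baire category. -/
def HasABP (F : Set (ℕ → X)) : Prop :=
  ∃ E F' : Set (ℕ → X),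
    IsRegOmega E ∧ @IsOpen _ (cantorTop X) E ∧
    IsRegOmega F' ∧ @IsMeagre _ (cantorTop X) F' ∧
    symmDiff F E ⊆ F'

/-- The measure is finite and non-null: `0 < μ(X^ω) < ∞`. -/
def FiniteNonNull (μ : @MeasureTheory.Measure (ℕ → X) (cantorBorel X)) : Prop :=
  0 < μ Set.univ ∧ μ Set.univ < ⊤

/-- `supp(μ) = X^ω`: every non-empty open set has positive measure. -/
def FullSupport (μ : @MeasureTheory.Measure (ℕ → X) (cantorBorel X)) : Prop :=
  ∀ U : Set (ℕ → X), @IsOpen _ (cantorTop X) U → U.Nonempty → 0 < μ U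

/-- The balance condition: there is `c > 0` such that for all `w ∈ X*`, `x ∈ X`
either `μ(wx·X^ω) = 0` or `c·μ(w·X^ω) ≤ μ(wx·X^ω)`. -/
def Balanced (μ : @MeasureTheory.Measure (ℕ → X) (cantorBorel X)) : Prop :=
  ∃ c : ENNReal, 0 < c ∧ ∀ (w : List X) (x : X),
    μ (cyl (w ++ [x])) = 0 ∨ c * μ (cyl w) ≤ μ (cyl (w ++ [x]))


lemma mem_cyl {w : List X} {ξ : ℕ → X} :
    ξ ∈ cyl w ↔ ∀ i x, w[i]? = some x → ξ i = x := by
  constructor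
  · rintro ⟨η, rfl⟩
    induction w generalizing η with
    | nil => simp
    | cons a w ih =>
      intro i x h
      cases i with
      | zero => exact Option.some.inj h
      | succ i => exact ih η i x (by simpa using h)
  · intro h
    induction w generalizing ξ with
    | nil => exact ⟨ξ, rfl⟩
    | cons a w ih =>
      obtain ⟨η, hη⟩ := @ih (fun n => ξ (n+1)) (fun i x hx => h (i+1) x (by simpa using hx))
      refine ⟨η, ?_⟩
      funext i
      cases i with
      | zero => exact h 0 a (by simp)
      | succ i => exact congrFun hη i

lemma cyl_mono {a b : List X} (h : a <+: b) {ξ : ℕ → X} (hb : ξ ∈ cyl b) : ξ ∈ cyl a := by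
  obtain ⟨c, rfl⟩ := h
  rw [mem_cyl] at *
  intro i x hx
  apply hb
  rw [List.getElem?_append_left]
  · exact hx
  · exact (List.getElem?_eq_some_iff.mp hx).1

lemma cyl_prefix {a b : List X} {ξ : ℕ → X} (ha : ξ ∈ cyl a) (hb : ξ ∈ cyl b)
    (h : a.length ≤ b.length) : a <+: b := by
  rw [mem_cyl] at *
  rw [List.prefix_iff_getElem]
  refine ⟨h, fun i hi => ?_⟩
  rw [← ha i a[i] (by simp), ← hb i b[i] (by simp)]

lemma pre_mem (ξ : ℕ → X) (n : ℕ) : ξ ∈ cyl ((List.range n).map ξ) := by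
  rw [mem_cyl]
  intro i x hx
  simp only [List.getElem?_map, Option.map_eq_some_iff, List.getElem?_eq_some_iff] at hx
  obtain ⟨a, ⟨h, rfl⟩, rfl⟩ := hx
  simp

lemma wcat_mem (w s : List X) (η : ℕ → X) (h : η ∈ cyl s) : wcat w η ∈ cyl (w ++ s) := by
  obtain ⟨ζ, rfl⟩ := h
  exact ⟨ζ, (Stream'.append_append_stream w s ζ).symm⟩

lemma chain_lim (g : ℕ → List X) (hg : ∀ n, g n <+: g (n+1)) (hl : ∀ n, n ≤ (g n).length) :
    ∃ ζ : ℕ → X, ∀ n, ζ ∈ cyl (g n) := by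
  have hm : ∀ m n, m ≤ n → g m <+: g n := by
    intro m n h
    induction h with
    | refl => exact List.prefix_rfl
    | step _ ih => exact ih.trans (hg _)
  refine ⟨fun i => (g (i+1))[i]'(hl (i+1)), fun n => ?_⟩
  rw [mem_cyl]
  intro i x hx
  obtain ⟨hi, rfl⟩ := List.getElem?_eq_some_iff.mp hx
  rcases le_total n (i+1) with h | h
  · exact ((hm _ _ h).getElem hi).symm
  · exact (hm _ _ h).getElem _

lemma cyl_open (w : List X) : @IsOpen _ (cantorTop X) (cyl w) := by
  letI : TopologicalSpace X := ⊥
  haveI : DiscreteTopology X := ⟨rfl⟩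
  change IsOpen (cyl w)
  rcases (cyl w).eq_empty_or_nonempty with h | ⟨x, hx⟩
  · rw [h]; exact isOpen_empty
  · have : cyl w = PiNat.cylinder x w.length := by
      ext y
      rw [mem_cyl] at *
      simp only [PiNat.cylinder, Set.mem_setOf_eq]
      constructor
      · intro hy i hi
        rw [hy i w[i] (by simp), hx i w[i] (by simp)]
      · intro hy i a ha
        rw [hy i (List.getElem?_eq_some_iff.mp ha).1, hx i a ha]
    rw [this]
    exact PiNat.isOpen_cylinder _ _ _

lemma open_cyl {O : Set (ℕ → X)} (hO : @IsOpen _ (cantorTop X) O) {x : ℕ → X} (hx : x ∈ O) :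
    ∃ n, ∀ m ≥ n, cyl ((List.range m).map x) ⊆ O := by
  letI : TopologicalSpace X := ⊥
  haveI : DiscreteTopology X := ⟨rfl⟩
  change IsOpen O at hO
  obtain ⟨c, ⟨y, n, rfl⟩, hxc, hc⟩ :=
    (PiNat.isTopologicalBasis_cylinders (fun _ : ℕ => X)).exists_subset_of_mem_open hx hO
  refine ⟨n, fun m hm z hz => hc ?_⟩
  intro i hi
  rw [← hxc i hi]
  rw [mem_cyl] at hz
  apply hz
  simp [List.getElem?_range (show i < m by omega)]

/-! Finiteness of the set of left quotients -/

lemma finite_lq_finite (W : Language X) (h : (W : Set (List X)).Finite) :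
    (Set.range W.leftQuotient).Finite := by
  have h1 : (⋃ x ∈ (W : Set (List X)), {p : List X | p ∈ x.inits}).Finite :=
    h.biUnion (fun x _ => x.inits.finite_toSet)
  refine ((h1.image W.leftQuotient).insert (0 : Language X)).subset ?_
  rintro _ ⟨w, rfl⟩
  by_cases hw : ∃ y, w ++ y ∈ W
  · right
    obtain ⟨y, hy⟩ := hw
    refine ⟨w, ?_, rfl⟩
    simp only [Set.mem_iUnion]
    exact ⟨w ++ y, hy, by simp⟩
  · left
    push Not at hw
    apply Language.ext
    intro x
    simpa using hw x

lemma finite_lq_concat (W V : Language X) (hW : (Set.range W.leftQuotient).Finite)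
    (hV : (Set.range V.leftQuotient).Finite) : (Set.range (W * V).leftQuotient).Finite := by
  let G : Language X → Set (Language X) → Language X :=
    fun A S => ({y | y ∈ A * V ∨ ∃ B ∈ S, y ∈ B} : Set (List X))
  refine (Set.Finite.image2 G hW hV.finite_subsets).subset ?_
  rintro _ ⟨w, rfl⟩
  refine ⟨_, ⟨w, rfl⟩, {B | ∃ a b, a ∈ W ∧ a ++ b = w ∧ B = V.leftQuotient b}, ?_, ?_⟩
  · rintro _ ⟨a, b, _, _, rfl⟩
    exact ⟨b, rfl⟩
  · apply Language.ext
    intro y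
    have : y ∈ G (W.leftQuotient w) {B | ∃ a b, a ∈ W ∧ a ++ b = w ∧ B = V.leftQuotient b} ↔
        y ∈ W.leftQuotient w * V ∨ ∃ a b, a ∈ W ∧ a ++ b = w ∧ b ++ y ∈ V := by
      constructor
      · rintro (h | ⟨_, ⟨a, b, h1, h2, rfl⟩, h3⟩)
        · exact Or.inl h
        · exact Or.inr ⟨a, b, h1, h2, h3⟩
      · rintro (h | ⟨a, b, h1, h2, h3⟩)
        · exact Or.inl h
        · exact Or.inr ⟨_, ⟨a, b, h1, h2, rfl⟩, h3⟩
    rw [this]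
    simp only [Language.mem_leftQuotient, Language.mem_mul]
    constructor
    · rintro (⟨a, ha, b, hb, rfl⟩ | ⟨a, b, ha, rfl, hb⟩)
      · exact ⟨w ++ a, ha, b, hb, by simp⟩
      · exact ⟨a, ha, b ++ y, hb, by simp⟩
    · rintro ⟨a, ha, b, hb, h⟩
      rcases List.append_eq_append_iff.mp h with ⟨c, rfl, rfl⟩ | ⟨c, rfl, rfl⟩
      · exact Or.inr ⟨a, c, ha, rfl, hb⟩
      · exact Or.inl ⟨c, ha, b, hb, rfl⟩

lemma kstar_append {W : Language X} {a b : List X} (ha : a ∈ W∗) (hb : b ∈ W∗) :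
    a ++ b ∈ W∗ := by
  rw [Language.mem_kstar] at *
  obtain ⟨L, rfl, hL⟩ := ha
  obtain ⟨M, rfl, hM⟩ := hb
  refine ⟨L ++ M, by simp, ?_⟩
  intro y hy
  rcases List.mem_append.mp hy with h | h
  · exact hL y h
  · exact hM y h

lemma kstar_single {W : Language X} {a : List X} (ha : a ∈ W) : a ∈ W∗ :=
  Language.mem_kstar.mpr ⟨[a], by simp, by simpa using ha⟩

lemma star_split (W : Language X) (L : List (List X)) (hL : ∀ v ∈ L, v ∈ W) :
    ∀ w y : List X, w ++ y = L.flatten → w = [] ∨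
      ∃ a b c d, a ∈ W∗ ∧ a ++ b = w ∧ b ++ c ∈ W ∧ d ∈ W∗ ∧ y = c ++ d := by
  induction L with
  | nil => intro w y h; left; simp at h; exact h.1
  | cons v L ih =>
    intro w y h
    rw [List.flatten_cons] at h
    have hv : v ∈ W := hL v (by simp)
    have hL' : ∀ v ∈ L, v ∈ W := fun u hu => hL u (by simp [hu])
    have hfl : L.flatten ∈ W∗ := Language.join_mem_kstar hL'
    rcases List.append_eq_append_iff.mp h with ⟨c, rfl, rfl⟩ | ⟨c, rfl, hc⟩
    · right
      exact ⟨[], w, c, L.flatten, Language.nil_mem_kstar _, rfl, hv, hfl, rfl⟩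
    · right
      rcases ih hL' c y hc.symm with rfl | ⟨a, b, c', d, ha, hab, hbc, hd, hy⟩
      · exact ⟨[], v, [], y, Language.nil_mem_kstar _, by simp, by simpa using hv,
          by simpa [hc] using hfl, by simp⟩
      · exact ⟨v ++ a, b, c', d, kstar_append (kstar_single hv) ha, by simp [hab], hbc, hd, hy⟩

lemma finite_lq_star (W : Language X) (hW : (Set.range W.leftQuotient).Finite) :
    (Set.range (W∗).leftQuotient).Finite := by
  let G : Set (Language X) → Language X :=
    fun S => ({y | ∃ B ∈ S, ∃ c d, c ∈ B ∧ d ∈ W∗ ∧ y = c ++ d} : Set (List X))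
  refine ((hW.finite_subsets.image G).insert (W∗)).subset ?_
  rintro _ ⟨w, rfl⟩
  by_cases hw : w = []
  · left; subst hw; rfl
  right
  refine ⟨{B | ∃ a b, a ∈ W∗ ∧ a ++ b = w ∧ B = W.leftQuotient b}, ?_, ?_⟩
  · rintro _ ⟨a, b, _, _, rfl⟩
    exact ⟨b, rfl⟩
  · apply Language.ext
    intro y
    rw [Language.mem_leftQuotient]
    constructor
    · rintro ⟨_, ⟨a, b, h1, h2, rfl⟩, c, d, hc, hd, rfl⟩
      rw [← h2]
      have := kstar_append (kstar_append h1 (kstar_single hc)) hd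
      simpa using this
    · intro h
      obtain ⟨L, h1, h2⟩ := Language.mem_kstar.mp h
      rcases star_split W L h2 w y h1 with h | ⟨a, b, c, d, ha, hab, hbc, hd, hy⟩
      · exact absurd h hw
      · exact ⟨_, ⟨a, b, ha, hab, rfl⟩, c, d, hbc, hd, hy⟩

lemma finite_lq {W : Language X} (h : IsRegLang W) : (Set.range W.leftQuotient).Finite := by
  induction h with
  | finite W h => exact finite_lq_finite W h
  | union W V _ _ h1 h2 =>
    refine (Set.Finite.image2 (fun A B => A + B) h1 h2).subset ?_
    rintro _ ⟨w, rfl⟩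
    exact ⟨_, ⟨w, rfl⟩, _, ⟨w, rfl⟩, rfl⟩
  | concat W V _ _ h1 h2 => exact finite_lq_concat W V h1 h2
  | star W _ h => exact finite_lq_star W h

lemma killer (L : Language X) (hL : (Set.range L.leftQuotient).Finite)
    (hk : ∀ p, ∃ v, ∀ v', p ++ v ++ v' ∉ L) : ∃ z, ∀ p v', p ++ z ++ v' ∉ L := by
  have key : ∀ S : Set (Language X), S.Finite → S ⊆ Set.range L.leftQuotient →
      ∃ z, ∀ A ∈ S, ∀ v', z ++ v' ∉ A := by
    intro S hS
    induction S, hS using Set.Finite.induction_on with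
    | empty => intro _; exact ⟨[], by simp⟩
    | @insert A S _ _ ih =>
      intro hsub
      obtain ⟨z, hz⟩ := ih (fun B hB => hsub (Or.inr hB))
      obtain ⟨p, hp⟩ := hsub (Or.inl rfl)
      obtain ⟨v, hv⟩ := hk (p ++ z)
      refine ⟨z ++ v, ?_⟩
      rintro B (rfl | hB) v'
      · rw [← hp, Language.mem_leftQuotient]
        simpa using hv v'
      · simpa using hz B hB (v ++ v')
  obtain ⟨z, hz⟩ := key _ hL le_rfl
  refine ⟨z, fun p v' h => hz _ ⟨p, rfl⟩ v' ?_⟩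
  rw [Language.mem_leftQuotient]
  simpa using h

lemma length_flatten_ge (l : List (List X)) (h : ∀ v ∈ l, v ≠ []) :
    l.length ≤ l.flatten.length := by
  induction l with
  | nil => simp
  | cons a l ih =>
    have h1 := ih (fun v hv => h v (by simp [hv]))
    have h2 := List.length_pos_iff.mpr (h a (by simp))
    simp only [List.flatten_cons, List.length_append, List.length_cons]
    omega

/-- A disjunctive word in `w·V^ω` yields a word `u` after which `V*` is dense. -/
lemma exists_dense (V : Language X) (hV : IsRegLang V) (w : List X) (η : ℕ → X)
    (hη : η ∈ omegaPow V) (hd : Disjunctive (wcat w η)) :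
    ∃ u, ∀ v, ∃ v', u ++ v ++ v' ∈ V∗ := by
  by_contra hcon
  push Not at hcon
  obtain ⟨z, hz⟩ := killer (V∗) (finite_lq (IsRegLang.star V hV)) hcon
  obtain ⟨u0, hu0⟩ := hd (w ++ z)
  obtain ⟨f, hf, hc⟩ := hη
  have hw : wcat w η ∈ cyl w := ⟨η, rfl⟩
  obtain ⟨p, hp⟩ : w <+: u0 ++ w :=
    cyl_prefix hw (cyl_mono ⟨z, by simp⟩ hu0) (by simp)
  rw [← List.append_assoc, ← hp] at hu0
  set l := (List.range (p ++ z).length).map f with hl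
  have h1 : wcat w η ∈ cyl (w ++ l.flatten) := wcat_mem w _ _ (hc (p ++ z).length)
  have hlen := length_flatten_ge l (by
    intro v hv
    obtain ⟨i, _, rfl⟩ := List.mem_map.mp hv
    exact (hf i).2)
  rw [hl, List.length_map, List.length_range, ← hl] at hlen
  obtain ⟨q, hq⟩ := cyl_prefix hu0 h1 (by
    rw [List.append_assoc, List.length_append, List.length_append (as := w)]; omega)
  have hq' : p ++ z ++ q = l.flatten := by simpa using hq
  apply hz p q
  rw [hq']
  apply Language.join_mem_kstar
  intro v hv
  obtain ⟨i, _, rfl⟩ := List.mem_map.mp hv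
  exact (hf i).1

lemma step_lemma [Nonempty X] (V : Language X) (w u : List X)
    (hu : ∀ v, ∃ v', u ++ v ++ v' ∈ V∗)
    (F : Set (ℕ → X)) (hF : @IsNowhereDense _ (cantorTop X) F) (l : List (List X)) :
    ∃ l' : List (List X), l' ≠ [] ∧ (∀ v ∈ l', v ∈ V ∧ v ≠ []) ∧
      ∀ ζ ∈ cyl (w ++ (l ++ l').flatten), ζ ∉ F := by
  letI := cantorTop X
  have hF' : interior (closure F) = ∅ := hF
  set t := w ++ l.flatten ++ u with ht
  have hnot : ¬ cyl t ⊆ closure F := by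
    intro h
    have h2 : cyl t ⊆ interior (closure F) := interior_maximal h (cyl_open t)
    rw [hF'] at h2
    exact h2 (⟨fun _ => Classical.arbitrary X, rfl⟩ : wcat t _ ∈ cyl t)
  obtain ⟨ζ, hζ, hζF⟩ := Set.not_subset.mp hnot
  obtain ⟨n, hn⟩ := open_cyl (O := (closure F)ᶜ) isClosed_closure.isOpen_compl hζF
  have h1 := hn (max n (t.length + 1)) (le_max_left _ _)
  obtain ⟨v, hv⟩ := cyl_prefix hζ (pre_mem ζ (max n (t.length + 1))) (by simp)
  rw [← hv] at h1
  have hvne : v ≠ [] := by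
    rintro rfl
    have := congrArg List.length hv
    simp at this
    omega
  obtain ⟨v', hv'⟩ := hu v
  obtain ⟨l', hl', hl''⟩ := Language.mem_kstar_iff_exists_nonempty.mp hv'
  refine ⟨l', ?_, hl'', ?_⟩
  · rintro rfl
    simp at hl'
    exact hvne hl'.2.1
  · intro y hy hyF
    refine h1 (cyl_mono ?_ hy) (subset_closure hyF)
    refine ⟨v', ?_⟩
    rw [List.flatten_append, ← hl', ht]
    simp

lemma not_meagre [Nonempty X] (V : Language X) (w u : List X)
    (hu : ∀ v, ∃ v', u ++ v ++ v' ∈ V∗)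
    (F : Set (ℕ → X)) (hF : ∀ η ∈ omegaPow V, wcat w η ∈ F) :
    ¬ @IsMeagre _ (cantorTop X) F := by
  letI := cantorTop X
  intro hm
  obtain ⟨S, hS, hSc, hFS⟩ := isMeagre_iff_countable_union_isNowhereDense.mp hm
  obtain ⟨E, hE⟩ := (hSc.insert (∅ : Set (ℕ → X))).exists_eq_range (Set.insert_nonempty _ _)
  have hEn : ∀ n, IsNowhereDense (E n) := by
    intro n
    have : E n ∈ insert ∅ S := hE ▸ Set.mem_range_self n
    rcases this with h | h
    · rw [h]; exact isNowhereDense_empty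
    · exact hS _ h
  choose g hg1 hg2 hg3 using fun n l => step_lemma V w u hu (E n) (hEn n) l
  let l : ℕ → List (List X) := fun n => Nat.rec [] (fun n l => l ++ g n l) n
  have hl : ∀ n, l (n+1) = l n ++ g n (l n) := fun n => rfl
  have hpre : ∀ n, l n <+: l (n+1) := fun n => ⟨_, (hl n).symm⟩
  have hmem : ∀ n, ∀ v ∈ l n, v ∈ V ∧ v ≠ [] := by
    intro n
    induction n with
    | zero => intro v hv; simp [l] at hv
    | succ n ih =>
      intro v hv
      rw [hl] at hv
      rcases List.mem_append.mp hv with h | h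
      · exact ih v h
      · exact hg2 _ _ v h
  have hlen : ∀ n, n ≤ (l n).length := by
    intro n
    induction n with
    | zero => simp
    | succ n ih =>
      rw [hl, List.length_append]
      have := List.length_pos_iff.mpr (hg1 n (l n))
      omega
  obtain ⟨f, hf⟩ := chain_lim l hpre hlen
  obtain ⟨η, hη⟩ := chain_lim (fun n => (l n).flatten)
    (fun n => by rw [hl, List.flatten_append]; exact ⟨_, rfl⟩)
    (fun n => (hlen n).trans (length_flatten_ge _ (fun v hv => (hmem n v hv).2)))
  have hpf : ∀ k, (List.range k).map f <+: l k := fun k =>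
    cyl_prefix (pre_mem f k) (hf k) (by simpa using hlen k)
  have hη' : η ∈ omegaPow V := by
    refine ⟨f, fun i => ?_, fun k => ?_⟩
    · apply hmem (i+1)
      apply (hpf (i+1)).subset
      exact List.mem_map.mpr ⟨i, by simp, rfl⟩
    · obtain ⟨c, hc⟩ := hpf k
      have := hη k
      simp only [← hc, List.flatten_append] at this
      exact cyl_mono ⟨_, rfl⟩ this
  obtain ⟨T, hT, hηT⟩ := hFS (hF η hη')
  have : T ∈ Set.range E := hE ▸ Or.inr hT
  obtain ⟨n, rfl⟩ := this
  exact hg3 n (l n) _ (wcat_mem w _ _ (hη (n+1))) hηT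

lemma forward {ξ : ℕ → X} {F : Set (ℕ → X)} (hF : IsRegOmega F)
    (hm : @IsMeagre _ (cantorTop X) F) (hξ : ξ ∈ F) : ¬ Disjunctive ξ := by
  intro hd
  haveI : Nonempty X := ⟨ξ 0⟩
  obtain ⟨n, W, V, hr, rfl⟩ := hF
  obtain ⟨i, w, hw, η, hη, rfl⟩ := Set.mem_iUnion.mp hξ
  obtain ⟨u, hu⟩ := exists_dense (V i) (hr i).2 w η hη hd
  exact not_meagre (V i) w u hu _
    (fun η' h => Set.mem_iUnion.mpr ⟨i, (⟨w, hw, η', h, rfl⟩ : ∃ w' ∈ W i, ∃ η ∈ omegaPow (V i), wcat w η' = wcat w' η)⟩) hm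

/-! The other direction -/

lemma block_flatten (ξ : ℕ → X) (n k : ℕ) :
    ((List.range k).map (fun i => (List.range n).map (fun j => ξ (i * n + j)))).flatten
      = (List.range (k * n)).map ξ := by
  induction k with
  | zero => simp
  | succ k ih =>
    rw [List.range_succ, List.map_append, List.flatten_append, ih, Nat.succ_mul,
      List.range_add, List.map_append]
    simp

lemma backward [Finite X] {ξ : ℕ → X} (h : ¬ Disjunctive ξ) :
    ∃ F : Set (ℕ → X), IsRegOmega F ∧ @IsMeagre _ (cantorTop X) F ∧ ξ ∈ F := by
  letI := cantorTop X
  unfold Disjunctive at h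
  push Not at h
  obtain ⟨w, hw⟩ := h
  have hw0 : w ≠ [] := by
    rintro rfl
    exact hw ⟨[], ξ, rfl⟩
  have hpos := List.length_pos_iff.mpr hw0
  set n := w.length with hn
  let V : Language X := ({v : List X | v.length = n ∧ v ≠ w} : Set (List X))
  have hVm : ∀ v, v ∈ V ↔ v.length = n ∧ v ≠ w := fun v => Iff.rfl
  have hlen : ∀ (f : ℕ → List X), (∀ i, f i ∈ V ∧ f i ≠ []) → ∀ k,
      (((List.range k).map f).flatten).length = k * n := by
    intro f hf k
    induction k with
    | zero => simp
    | succ k ih =>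
      rw [List.range_succ, List.map_append, List.flatten_append, List.length_append, ih,
        Nat.succ_mul]
      simp [((hVm _).mp (hf k).1).1]
  refine ⟨omegaPow V, ⟨1, fun _ => 1, fun _ => V, fun _ => ⟨?_, ?_⟩, ?_⟩, ?_, ?_⟩
  · exact IsRegLang.finite _ (Set.finite_singleton _)
  · exact IsRegLang.finite _ ((List.finite_length_eq X n).subset (fun v hv => hv.1))
  · ext ζ
    simp only [Set.mem_iUnion]
    constructor
    · intro hζ
      exact ⟨0, [], rfl, ζ, hζ, rfl⟩
    · rintro ⟨_, v, hv, η, hη, rfl⟩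
      rw [Language.mem_one] at hv
      subst hv
      exact hη
  · apply IsNowhereDense.isMeagre
    by_contra hne
    obtain ⟨x, hx⟩ := Set.nonempty_iff_ne_empty.mpr hne
    obtain ⟨m, hm⟩ := open_cyl isOpen_interior hx
    have h1 := hm (m * n) (Nat.le_mul_of_pos_right m hpos)
    set t := (List.range (m * n)).map x with ht
    have h2 : wcat (t ++ w) x ∈ cyl (t ++ w) := ⟨x, rfl⟩
    have h3 := interior_subset (h1 (cyl_mono ⟨w, rfl⟩ h2))
    obtain ⟨y, hy1, f, hf, hy2⟩ := mem_closure_iff.mp h3 _ (cyl_open _) h2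
    have h4 := hy2 (m+1)
    have hp := cyl_prefix h4 hy1 (by rw [hlen f hf, Nat.succ_mul]; simp [ht, hn])
    have he := hp.eq_of_length (by rw [hlen f hf, Nat.succ_mul]; simp [ht, hn])
    rw [List.range_succ, List.map_append, List.flatten_append] at he
    have := (List.append_inj he (by rw [hlen f hf]; simp [ht])).2
    apply ((hVm _).mp (hf m).1).2
    simpa using this
  · refine ⟨fun i => (List.range n).map (fun j => ξ (i * n + j)), fun i => ⟨⟨by simp, ?_⟩, ?_⟩, ?_⟩
    · intro he
      apply hw
      refine ⟨(List.range (i * n)).map ξ, ?_⟩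
      have := pre_mem ξ (i * n + n)
      rw [List.range_add, List.map_append, List.map_map] at this
      rw [← he]
      exact this
    · intro he
      have := congrArg List.length he
      simp at this
      omega
    · intro k
      rw [block_flatten]
      exact pre_mem ξ _

theorem stmt8 {X : Type} [Fintype X] (hX : 2 ≤ Fintype.card X) :
    (∀ ξ : ℕ → X,
      (∃ F : Set (ℕ → X), IsRegOmega F ∧ @IsMeagre _ (cantorTop X) F ∧ ξ ∈ F)
        ↔ ¬ Disjunctive ξ) ∧
    ⋃₀ {F : Set (ℕ → X) | IsRegOmega F ∧ @IsMeagre _ (cantorTop X) F}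
      = ⋃ w : List X, (infixOcc w)ᶜ := by
  have key : ∀ ξ : ℕ → X,
      (∃ F : Set (ℕ → X), IsRegOmega F ∧ @IsMeagre _ (cantorTop X) F ∧ ξ ∈ F)
        ↔ ¬ Disjunctive ξ :=
    fun ξ => ⟨fun ⟨_, h1, h2, h3⟩ => forward h1 h2 h3, fun h => backward h⟩
  refine ⟨key, ?_⟩
  ext ξ
  have h := key ξ
  simp only [Set.mem_sUnion, Set.mem_setOf_eq, Set.mem_iUnion, Set.mem_compl_iff]
  rw [Disjunctive, not_forall] at h
  rw [← h]
  constructor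
  · rintro ⟨F, ⟨h1, h2⟩, h3⟩; exact ⟨F, h1, h2, h3⟩
  · rintro ⟨F, h1, h2, h3⟩; exact ⟨F, ⟨h1, h2⟩, h3⟩

end AutoBaire
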